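/- arXiv:2108.05984 — 4 statements merged into one kernel-verified Lean document; each statement's English description precedes it below -/
import Mathlib

section
/- Let X_1, X_2, ... be an infinite sequence of {0,1}-valued exchangeable random variables. Then there exists a probability measure μ on [0,1] such that for every positive integer n and all x_1, ..., x_n ∈ {0,1}, Pr(X_1 = x_1, ..., X_n = x_n) = ∫_0^1 p^s (1−p)^{n−s} dμ(p), where s = x_1 + ... + x_n. Furthermore, the measure μ is uniquely determined. -/
open MeasureTheory

/-!
Let `M N` be the mean of the first `N` variables. For a binary pattern `x` of length `n` with sum
`s`, the Bernoulli weight `(M N) ^ s * (1 - M N) ^ (n - s)` is the proportion of maps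
`f : Fin n → Fin N` with `X (f j) = x j` for all `j`, i.e. the empirical probability of `x` under
sampling with replacement. By exchangeability every injective `f` contributes the probability of
`x` to its expectation, and the proportion of injective maps tends to `1`. Hence any weak limit
point of the laws of the `M N`, which exists since `[0, 1]` is compact, is a mixing measure.
The constant patterns `1` give the moments of a mixing measure, and these determine it because
polynomials separate finite measures on a compact set.
-/

open Filter Topology
open scoped BigOperators

section Averages

lemma prod_expect_eq_expect_prod {ι κ R : Type*} [Fintype ι] [Fintype κ] [DecidableEq κ]
    [CommSemiring R] [Module ℚ≥0 R] [IsScalarTower ℚ≥0 R R] [SMulCommClass ℚ≥0 R R]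
    (f : κ → ι → R) :
    ∏ k, 𝔼 i, f k i = 𝔼 g : κ → ι, ∏ k, f k (g k) := by
  simp only [Finset.expect, Finset.prod_smul, Fintype.prod_sum, Finset.prod_const,
    Finset.card_univ, Fintype.card_fun, inv_pow, Nat.cast_pow]

lemma abs_expect_sub_le_mul_one_sub_dens {ι : Type*} [Fintype ι] [Nonempty ι] (s : Finset ι)
    {a : ι → ℝ} {c C : ℝ} (hs : ∀ i ∈ s, a i = c) (hC : ∀ i, |a i - c| ≤ C) :
    |(𝔼 i, a i) - c| ≤ C * (1 - s.dens) := by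
  classical
  have hterm : ∀ i, |a i - c| ≤ C * (1 - if i ∈ s then 1 else 0) := fun i => by
    split_ifs with hi
    · simp [hs i hi]
    · simpa using hC i
  have hdens : (𝔼 i, if i ∈ s then (1 : ℝ) else 0) = s.dens := by
    simp [Fintype.expect_eq_sum_div_card, Finset.nnratCast_dens]
  calc |(𝔼 i, a i) - c| = |𝔼 i, (a i - c)| := by
        rw [Finset.expect_sub_distrib, Fintype.expect_const]
    _ ≤ 𝔼 i, |a i - c| := Finset.abs_expect_le _ _
    _ ≤ 𝔼 i, C * (1 - if i ∈ s then 1 else 0) := Finset.expect_le_expect fun i _ => hterm i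
    _ = C * (1 - s.dens) := by
        rw [← Finset.mul_expect, Finset.expect_sub_distrib, Fintype.expect_const, hdens]

lemma tendsto_dens_injective (n : ℕ) :
    Tendsto (fun N : ℕ =>
      (({f | Function.Injective f} : Finset (Fin n → Fin N)).dens : ℝ)) atTop (𝓝 1) := by
  have hcard : ∀ N, Finset.card {f : Fin n → Fin N | Function.Injective f}
      = N.descFactorial n := fun N => by
    rw [← Fintype.card_subtype,
      Fintype.card_congr (Equiv.subtypeInjectiveEquivEmbedding (Fin n) (Fin N)),
      Fintype.card_embedding_eq, Fintype.card_fin, Fintype.card_fin]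
  have hlim := (Asymptotics.isEquivalent_iff_tendsto_one <| by
    filter_upwards [eventually_gt_atTop 0] with N hN
    positivity).1 (isEquivalent_descFactorial n)
  simpa [Finset.nnratCast_dens, hcard, Pi.div_def] using hlim

lemma tendsto_expect_of_forall_injective_eq {n : ℕ} {a : ∀ N : ℕ, (Fin n → Fin N) → ℝ} {c C : ℝ}
    (hinj : ∀ N f, Function.Injective f → a N f = c) (hC : ∀ N f, |a N f - c| ≤ C) :
    Tendsto (fun N => 𝔼 f, a N f) atTop (𝓝 c) := by
  have hbound : Tendsto (fun N : ℕ =>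
      C * (1 - (({f | Function.Injective f} : Finset (Fin n → Fin N)).dens : ℝ)))
      atTop (𝓝 0) := by
    simpa using ((tendsto_dens_injective n).const_sub 1).const_mul C
  rw [tendsto_iff_dist_tendsto_zero]
  refine squeeze_zero' (.of_forall fun _ => dist_nonneg) ?_ hbound
  filter_upwards [eventually_ne_atTop 0] with N hN
  have : NeZero N := ⟨hN⟩
  exact abs_expect_sub_le_mul_one_sub_dens _ (by simpa using hinj N) (hC N)

end Averages

section Exchangeable

variable {Ω α : Type*} [MeasurableSpace Ω] [MeasurableSpace α]

/-- The infinite sequence `X` is exchangeable under `μ`: the joint law of every finite initial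
segment is invariant under permutations of its indices. `Measure.map` sends a function that is not
a.e. measurable to `0`, so this is meaningful only for a.e. measurable `X i`. -/
def Exchangeable (X : ℕ → Ω → α) (μ : Measure Ω) : Prop :=
  ∀ (n : ℕ) (σ : Equiv.Perm (Fin n)),
    μ.map (fun ω (i : Fin n) => X (σ i) ω) = μ.map (fun ω (i : Fin n) => X i ω)

namespace Exchangeable

variable {X : ℕ → Ω → α} {μ : Measure Ω}

lemma map_eq_map_of_injective (hX : Exchangeable X μ) (hmeas : ∀ i, AEMeasurable (X i) μ)
    {ι : Type*} [Finite ι] {f g : ι → ℕ} (hf : f.Injective) (hg : g.Injective) :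
    μ.map (fun ω i => X (f i) ω) = μ.map (fun ω i => X (g i) ω) := by
  obtain ⟨N, hN⟩ : ∃ N, ∀ i, f i < N ∧ g i < N := by
    obtain ⟨M, hM⟩ := (Set.finite_range (f ⊔ g)).bddAbove
    exact ⟨M + 1, fun i => by simpa [Nat.lt_succ_iff] using hM (Set.mem_range_self i)⟩
  let f' : ι → Fin N := fun i => ⟨f i, (hN i).1⟩
  let g' : ι → Fin N := fun i => ⟨g i, (hN i).2⟩
  obtain ⟨σ, hσ⟩ := Equiv.Perm.exists_extending_pair g' f'
    (fun i j h => hg (Fin.ext_iff.1 h)) (fun i j h => hf (Fin.ext_iff.1 h))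
  have hrestrict : Measurable fun (y : Fin N → α) i => y (g' i) := by fun_prop
  have h := congrArg (Measure.map fun y i => y (g' i)) (hX N σ)
  rw [AEMeasurable.map_map_of_aemeasurable hrestrict.aemeasurable
      (aemeasurable_pi_lambda _ fun i => hmeas _),
    AEMeasurable.map_map_of_aemeasurable hrestrict.aemeasurable
      (aemeasurable_pi_lambda _ fun i => hmeas _)] at h
  simpa [Function.comp_def, hσ, f', g'] using h

lemma tendsto_expect_real_map [IsFiniteMeasure μ] (hX : Exchangeable X μ)
    (hmeas : ∀ i, AEMeasurable (X i) μ) {n : ℕ} (B : Set (Fin n → α)) :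
    Tendsto (fun N : ℕ => 𝔼 f : Fin n → Fin N, (μ.map fun ω j => X (f j) ω).real B) atTop
      (𝓝 ((μ.map fun ω (j : Fin n) => X j ω).real B)) := by
  have hle : ∀ f : Fin n → ℕ, (μ.map fun ω j => X (f j) ω).real B ≤ μ.real Set.univ := fun f => by
    refine (measureReal_mono (Set.subset_univ B)).trans_eq ?_
    simp [measureReal_def, Measure.map_apply_of_aemeasurable
      (aemeasurable_pi_lambda _ fun j => hmeas (f j)) MeasurableSet.univ]
  refine tendsto_expect_of_forall_injective_eq (C := μ.real Set.univ) (fun N f hf => ?_)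
    fun N f => ?_
  · exact congrArg (fun ρ : Measure (Fin n → α) => ρ.real B)
      (hX.map_eq_map_of_injective hmeas (Fin.val_injective.comp hf) Fin.val_injective)
  · exact abs_sub_le_of_nonneg_of_le measureReal_nonneg (hle fun j => f j) measureReal_nonneg
      (hle fun j => j)

end Exchangeable

end Exchangeable

section BernoulliWeight

/-- The probability of the binary pattern `x` under `n` independent Bernoulli trials with success
probability `p`. The natural subtraction is exact for binary `x`. -/
def bernoulliWeight {n : ℕ} (x : Fin n → ℕ) (p : ℝ) : ℝ :=
  p ^ (∑ j, x j) * (1 - p) ^ (n - ∑ j, x j)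

variable {n : ℕ} {x : Fin n → ℕ}

@[fun_prop]
lemma continuous_bernoulliWeight : Continuous (bernoulliWeight x) := by
  unfold bernoulliWeight
  fun_prop

lemma bernoulliWeight_eq_prod (hx : ∀ j, x j = 0 ∨ x j = 1) (p : ℝ) :
    bernoulliWeight x p = ∏ j, p ^ x j * (1 - p) ^ (1 - x j) := by
  have hfailures : n - ∑ j, x j = ∑ j, (1 - x j) := by
    rw [Finset.sum_tsub_distrib _ fun j _ => by have := hx j; omega]
    simp
  rw [bernoulliWeight, hfailures, Finset.prod_mul_distrib, Finset.prod_pow_eq_pow_sum,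
    Finset.prod_pow_eq_pow_sum]

variable {ι : Type*} [Fintype ι] [Nonempty ι] {y : ι → ℕ}

lemma expect_boole_eq_pow_mul_pow (hy : ∀ i, y i = 0 ∨ y i = 1) {a : ℕ} (ha : a = 0 ∨ a = 1) :
    𝔼 i, (if y i = a then (1 : ℝ) else 0)
      = (𝔼 i, (y i : ℝ)) ^ a * (1 - 𝔼 i, (y i : ℝ)) ^ (1 - a) := by
  obtain rfl | rfl := ha
  · have hind : ∀ i, (if y i = 0 then (1 : ℝ) else 0) = 1 - y i := fun i => by
      obtain h | h := hy i <;> simp [h]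
    simp [hind, Finset.expect_sub_distrib]
  · have hind : ∀ i, (if y i = 1 then (1 : ℝ) else 0) = y i := fun i => by
      obtain h | h := hy i <;> simp [h]
    simp [hind]

lemma bernoulliWeight_expect (hy : ∀ i, y i = 0 ∨ y i = 1) (hx : ∀ j, x j = 0 ∨ x j = 1) :
    bernoulliWeight x (𝔼 i, (y i : ℝ)) = 𝔼 f : Fin n → ι, if y ∘ f = x then 1 else 0 := by
  calc bernoulliWeight x (𝔼 i, (y i : ℝ))
      = ∏ j, 𝔼 i, (if y i = x j then (1 : ℝ) else 0) := by
        simp_rw [bernoulliWeight_eq_prod hx, expect_boole_eq_pow_mul_pow hy (hx _)]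
    _ = 𝔼 f : Fin n → ι, ∏ j, if y (f j) = x j then 1 else 0 := prod_expect_eq_expect_prod _
    _ = 𝔼 f : Fin n → ι, if y ∘ f = x then 1 else 0 := by
        simp [Finset.prod_ite_zero, funext_iff]

end BernoulliWeight

section EmpiricalMean

variable {Ω : Type*} {X : ℕ → Ω → ℕ}

/-- The mean of the first `N` terms of the sequence `X`; it is `0` for `N = 0`. -/
noncomputable def empiricalMean (X : ℕ → Ω → ℕ) (N : ℕ) (ω : Ω) : ℝ :=
  𝔼 i : Fin N, (X i ω : ℝ)

lemma empiricalMean_mem_Icc (hX : ∀ i ω, X i ω = 0 ∨ X i ω = 1) (N : ℕ) (ω : Ω) :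
    empiricalMean X N ω ∈ Set.Icc (0 : ℝ) 1 := by
  refine ⟨Finset.expect_nonneg fun i _ => Nat.cast_nonneg _, ?_⟩
  obtain rfl | hN := eq_or_ne N 0
  · simp [empiricalMean]
  · have : NeZero N := ⟨hN⟩
    exact Finset.expect_le Finset.univ_nonempty fun i _ => by
      obtain h | h := hX i ω <;> simp [h]

variable [MeasurableSpace Ω]

lemma measurable_empiricalMean (hmeas : ∀ i, Measurable (X i)) (N : ℕ) :
    Measurable (empiricalMean X N) := by
  have heq : empiricalMean X N = fun ω => (∑ i : Fin N, (X i ω : ℝ)) / N := by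
    ext ω
    simp [empiricalMean, Fintype.expect_eq_sum_div_card]
  rw [heq]
  fun_prop

lemma integral_bernoulliWeight_empiricalMean {μ : Measure Ω} [IsFiniteMeasure μ]
    (hmeas : ∀ i, Measurable (X i)) (hX : ∀ i ω, X i ω = 0 ∨ X i ω = 1) {N n : ℕ} (hN : N ≠ 0)
    {x : Fin n → ℕ} (hx : ∀ j, x j = 0 ∨ x j = 1) :
    ∫ ω, bernoulliWeight x (empiricalMean X N ω) ∂μ
      = 𝔼 f : Fin n → Fin N, (μ.map fun ω j => X (f j) ω).real {x} := by
  have : NeZero N := ⟨hN⟩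
  have hmap : ∀ f : Fin n → Fin N, Measurable fun ω j => X (f j) ω :=
    fun f => measurable_pi_lambda _ fun j => hmeas _
  have hweight : ∀ ω, bernoulliWeight x (empiricalMean X N ω)
      = 𝔼 f : Fin n → Fin N, ((fun ω j => X (f j) ω) ⁻¹' {x}).indicator 1 ω := fun ω => by
    classical
    simpa [empiricalMean, Set.indicator_apply, Function.comp_def] using
      bernoulliWeight_expect (fun i : Fin N => hX i ω) hx
  simp_rw [hweight, Fintype.expect_eq_sum_div_card]
  rw [integral_div, integral_finsetSum _ fun f _ => (integrable_const 1).indicator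
    (hmap f (measurableSet_singleton x))]
  simp_rw [integral_indicator_one (hmap _ (measurableSet_singleton x)),
    map_measureReal_apply (hmap _) (measurableSet_singleton x)]

end EmpiricalMean

section MeasuresOnCompactSpaces

lemma exists_probabilityMeasure_forall_integral_eq_of_tendsto {K ι : Type*} [TopologicalSpace K]
    [T2Space K] [CompactSpace K] [MeasurableSpace K] [BorelSpace K] (l : Filter ι) [l.NeBot]
    (ρ : ι → ProbabilityMeasure K) :
    ∃ μ : ProbabilityMeasure K, ∀ (g : C(K, ℝ)) (c : ℝ),
      Tendsto (fun i => ∫ p, g p ∂(ρ i : Measure K)) l (𝓝 c) → ∫ p, g p ∂(μ : Measure K) = c := by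
  obtain ⟨μ, -, hμ⟩ := isCompact_univ.ultrafilter_le_nhds ((Ultrafilter.of l).map ρ) (by simp)
  have hρ : Tendsto ρ (Ultrafilter.of l) (𝓝 μ) := hμ
  refine ⟨μ, fun g c hc => tendsto_nhds_unique ?_ (hc.mono_left (Ultrafilter.of_le l))⟩
  exact ProbabilityMeasure.tendsto_iff_forall_integral_tendsto.1 hρ
    (BoundedContinuousFunction.mkOfCompact g)

variable {s : Set ℝ} [CompactSpace s] {μ ν : Measure s} [IsFiniteMeasure μ]

lemma integral_polynomial_eval_eq_sum (q : Polynomial ℝ) :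
    ∫ x, q.eval (x : ℝ) ∂μ
      = ∑ i ∈ Finset.range (q.natDegree + 1), q.coeff i * ∫ x, (x : ℝ) ^ i ∂μ := by
  simp_rw [Polynomial.eval_eq_sum_range, ← integral_const_mul]
  refine integral_finsetSum _ fun i _ => ?_
  have hcont : Continuous fun x : s => q.coeff i * (x : ℝ) ^ i := by fun_prop
  exact hcont.integrable_of_hasCompactSupport (HasCompactSupport.of_compactSpace _)

lemma measure_ext_of_forall_integral_pow_eq [IsFiniteMeasure ν]
    (h : ∀ n : ℕ, ∫ x, (x : ℝ) ^ n ∂μ = ∫ x, (x : ℝ) ^ n ∂ν) : μ = ν := by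
  let A : StarSubalgebra ℝ (BoundedContinuousFunction s ℝ) :=
    { (polynomialFunctions s).comap (BoundedContinuousFunction.toContinuousMapₐ ℝ) with
      star_mem' := id }
  refine ext_of_forall_mem_subalgebra_integral_eq_of_pseudoEMetric_complete_countable (𝕜 := ℝ)
    (A := A) (fun x y hxy => ?_) fun g hg => ?_
  · obtain ⟨_, ⟨f, hf, rfl⟩, hfxy⟩ := polynomialFunctions_separatesPoints s hxy
    exact ⟨f, ⟨f, ⟨.mkOfCompact f, hf, rfl⟩, rfl⟩, hfxy⟩
  · obtain ⟨q, -, hq⟩ := hg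
    have hgq : ∀ x, g x = q.eval (x : ℝ) := fun x => (DFunLike.congr_fun hq x).symm
    simp_rw [hgq, integral_polynomial_eval_eq_sum, h]

end MeasuresOnCompactSpaces

section MixingMeasure

variable {Ω : Type*} [MeasurableSpace Ω] {X : ℕ → Ω → ℕ} {ℙ : Measure Ω}

/-- `μ` is a mixing measure for the binary sequence `X`: the probability of every nonempty binary
pattern is its Bernoulli weight averaged over `μ`. -/
def IsMixingMeasure (X : ℕ → Ω → ℕ) (ℙ : Measure Ω) (μ : Measure (Set.Icc (0 : ℝ) 1)) : Prop :=
  ∀ n : ℕ, 0 < n → ∀ x : Fin n → ℕ, (∀ j, x j = 0 ∨ x j = 1) →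
    ℙ.real {ω | ∀ j : Fin n, X j ω = x j} = ∫ p : Set.Icc (0 : ℝ) 1, bernoulliWeight x p ∂μ

lemma Exchangeable.exists_isMixingMeasure [IsProbabilityMeasure ℙ] (hexch : Exchangeable X ℙ)
    (hmeas : ∀ i, Measurable (X i)) (hX : ∀ i ω, X i ω = 0 ∨ X i ω = 1) :
    ∃ μ : ProbabilityMeasure (Set.Icc (0 : ℝ) 1), IsMixingMeasure X ℙ μ := by
  let mean : ℕ → Ω → Set.Icc (0 : ℝ) 1 := fun N ω => ⟨_, empiricalMean_mem_Icc hX N ω⟩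
  have hmean : ∀ N, Measurable (mean N) := fun N => (measurable_empiricalMean hmeas N).subtype_mk
  obtain ⟨μ, hμ⟩ := exists_probabilityMeasure_forall_integral_eq_of_tendsto atTop fun N =>
    (⟨ℙ.map (mean N), Measure.isProbabilityMeasure_map (hmean N).aemeasurable⟩ :
      ProbabilityMeasure (Set.Icc (0 : ℝ) 1))
  refine ⟨μ, fun n _ x hx => ?_⟩
  let weight : C(Set.Icc (0 : ℝ) 1, ℝ) := ⟨fun p => bernoulliWeight x p, by fun_prop⟩
  have hlim := hexch.tendsto_expect_real_map (fun i => (hmeas i).aemeasurable) {x}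
  have hreal : ℙ.real {ω | ∀ j : Fin n, X j ω = x j}
      = (ℙ.map fun ω (j : Fin n) => X j ω).real {x} := by
    rw [map_measureReal_apply (measurable_pi_lambda _ fun j => hmeas _)
      (measurableSet_singleton x)]
    simp [Set.preimage, funext_iff]
  refine hreal.trans (hμ weight _ (hlim.congr' ?_)).symm
  filter_upwards [eventually_ne_atTop 0] with N hN
  rw [← integral_bernoulliWeight_empiricalMean hmeas hX hN hx]
  exact (integral_map (hmean N).aemeasurable weight.continuous.aestronglyMeasurable).symm

namespace IsMixingMeasure

variable {μ ν : Measure (Set.Icc (0 : ℝ) 1)}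

lemma integral_pow_eq (hμ : IsMixingMeasure X ℙ μ) {n : ℕ} (hn : 0 < n) :
    ∫ p : Set.Icc (0 : ℝ) 1, (p : ℝ) ^ n ∂μ = ℙ.real {ω | ∀ j : Fin n, X j ω = 1} := by
  simpa [bernoulliWeight] using (hμ n hn (fun _ => 1) fun _ => .inr rfl).symm

lemma unique [IsProbabilityMeasure μ] [IsProbabilityMeasure ν] (hμ : IsMixingMeasure X ℙ μ)
    (hν : IsMixingMeasure X ℙ ν) : μ = ν := by
  refine measure_ext_of_forall_integral_pow_eq fun n => ?_
  obtain rfl | hn := Nat.eq_zero_or_pos n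
  · simp
  · rw [hμ.integral_pow_eq hn, hν.integral_pow_eq hn]

end IsMixingMeasure

end MixingMeasure

/-- **de Finetti's Theorem, distributional form.** For an infinite exchangeable sequence of
`{0,1}`-valued random variables there is a unique probability (mixing) measure `μ` on `[0,1]`
such that every finite-dimensional probability is the corresponding mixture of Bernoulli
product probabilities. -/
theorem deFinetti_distributional
    {Ω : Type*} [MeasurableSpace Ω] (ℙ : Measure Ω) [IsProbabilityMeasure ℙ]
    (X : ℕ → Ω → ℕ)
    (hmeas : ∀ i, Measurable (X i))
    (hbin : ∀ i ω, X i ω = 0 ∨ X i ω = 1)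
    (hexch : ∀ (n : ℕ) (σ : Equiv.Perm (Fin n)),
      Measure.map (fun ω (i : Fin n) => X (σ i) ω) ℙ
        = Measure.map (fun ω (i : Fin n) => X i ω) ℙ) :
    ∃! μ : Measure (Set.Icc (0 : ℝ) 1), IsProbabilityMeasure μ ∧
      ∀ (n : ℕ), 0 < n → ∀ x : Fin n → ℕ, (∀ i, x i = 0 ∨ x i = 1) →
        (ℙ {ω | ∀ i : Fin n, X i ω = x i}).toReal
          = ∫ p : Set.Icc (0 : ℝ) 1,
              (p : ℝ) ^ (∑ i, x i) * (1 - (p : ℝ)) ^ (n - ∑ i, x i) ∂μ := by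
  obtain ⟨μ, hμ⟩ := Exchangeable.exists_isMixingMeasure hexch hmeas hbin
  refine ⟨μ, ⟨inferInstance, hμ⟩, ?_⟩
  rintro ν ⟨hprob, hν⟩
  exact IsMixingMeasure.unique hν hμ
end

section
/- Let S be a standard Borel space and let X_1, X_2, ... be an infinite sequence of S-valued exchangeable random variables. Then there exists a probability measure μ on the space P(S) of Borel probability measures on S such that for every positive integer n and all measurable sets A_1, ..., A_n ⊆ S, Pr(X_1 ∈ A_1, ..., X_n ∈ A_n) = ∫_{P(S)} π(A_1) · ... · π(A_n) dμ(π). Furthermore, the mixing measure μ is uniquely determined. -/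
open MeasureTheory

/-!
Existence (for contractable sequences, following Ryll-Nardzewski). Let `κ x` be the conditional law
of the first coordinate given the subsequent ones. Skipping the second coordinate does not change
the law, so `κ x A` has the same correlation with its shift as with itself; as both also have the
same second moment, `κ x A` is almost surely shift invariant. Peeling off one coordinate at a time
and using this invariance, the coordinates are conditionally independent with common law `κ x`, and
the mixing measure is the law of `κ`.

Uniqueness. The integrals of `π (A 1) ⋯ π (A n)` are the mixed moments of the `[0, 1]`-valued
family `A ↦ π A`. By Stone–Weierstrass they determine its finite-dimensional laws, hence its law,
and the σ-algebra on measures is the one generated by this family.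
-/

section SecondMoments

open scoped ENNReal

theorem mul_self_add_mul_self_eq_two_mul_add_tsub_sq {R : Type*} [CommSemiring R] [LinearOrder R]
    [CanonicallyOrderedAdd R] [Sub R] [OrderedSub R] (a b : R) :
    a * a + b * b = 2 * (a * b) + ((a - b) + (b - a)) ^ 2 := by
  wlog hab : a ≤ b generalizing a b
  · rw [add_comm, this b a (le_of_not_ge hab), mul_comm b a, add_comm (b - a)]
  · have hb : b = a + (b - a) := (add_tsub_cancel_of_le hab).symm
    rw [tsub_eq_zero_of_le hab, zero_add]
    generalize b - a = d at hb ⊢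
    subst hb
    ring

variable {α : Type*} [MeasurableSpace α] {μ : Measure α} {f g : α → ℝ≥0∞}

theorem ae_eq_of_lintegral_mul_eq_lintegral_mul_self (hf : AEMeasurable f μ)
    (hg : AEMeasurable g μ) (hfin : ∫⁻ x, f x * f x ∂μ ≠ ∞)
    (hfg : ∫⁻ x, f x * g x ∂μ = ∫⁻ x, f x * f x ∂μ)
    (hgg : ∫⁻ x, g x * g x ∂μ = ∫⁻ x, f x * f x ∂μ) : f =ᵐ[μ] g := by
  have hdist : ∫⁻ x, ((f x - g x) + (g x - f x)) ^ 2 ∂μ = 0 := by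
    have hexpand := lintegral_congr (μ := μ) fun x =>
      mul_self_add_mul_self_eq_two_mul_add_tsub_sq (f x) (g x)
    rw [lintegral_add_left' (hf.fun_mul hf), lintegral_add_left' ((hf.fun_mul hg).const_mul 2),
      lintegral_const_mul'' 2 (hf.fun_mul hg), hfg, hgg, ← two_mul] at hexpand
    have hfin' : 2 * ∫⁻ x, f x * f x ∂μ ≠ ∞ := ENNReal.mul_ne_top ENNReal.ofNat_ne_top hfin
    exact (ENNReal.add_right_inj hfin').1 (by rw [← hexpand, add_zero])
  rw [lintegral_eq_zero_iff' (by fun_prop)] at hdist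
  filter_upwards [hdist] with x hx
  obtain ⟨hle, hge⟩ : f x ≤ g x ∧ g x ≤ f x := by simpa [tsub_eq_zero_iff_le] using hx
  exact le_antisymm hle hge

end SecondMoments

section Contractable

variable {S : Type*} [MeasurableSpace S]

/-- The law `P` of a random sequence is contractable (or spreadable) if every subsequence has the
same law as the whole sequence. -/
def IsContractable (P : Measure (ℕ → S)) : Prop :=
  ∀ τ : ℕ → ℕ, StrictMono τ → MeasurePreserving (fun x => x ∘ τ) P P

theorem map_comp_eq_of_exchangeable {Ω : Type*} [MeasurableSpace Ω] {μ : Measure Ω}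
    [IsFiniteMeasure μ] {X : ℕ → Ω → S} (hX : ∀ i, AEMeasurable (X i) μ)
    (hexch : ∀ (n : ℕ) (σ : Equiv.Perm (Fin n)),
      μ.map (fun ω (i : Fin n) => X (σ i) ω) = μ.map (fun ω (i : Fin n) => X i ω))
    {τ : ℕ → ℕ} (hτ : Function.Injective τ) :
    μ.map (fun ω i => X (τ i) ω) = μ.map (fun ω i => X i ω) := by
  refine (ProbabilityTheory.map_eq_iff_forall_finset_map_restrict_eq
    (aemeasurable_pi_lambda _ fun i => hX (τ i)) (aemeasurable_pi_lambda _ hX)).2 fun I => ?_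
  obtain ⟨N, hN⟩ : ∃ N, ∀ i ∈ I, i < N ∧ τ i < N := by
    refine ⟨I.sup (fun i => i + τ i) + 1, fun i hi => ?_⟩
    have := Finset.le_sup (f := fun i => i + τ i) hi
    omega
  let incl : I → Fin N := fun i => ⟨i, (hN i i.2).1⟩
  obtain ⟨σ, hσ⟩ : ∃ σ : Equiv.Perm (Fin N), ∀ i : I, σ (incl i) = ⟨τ i, (hN i i.2).2⟩ :=
    Equiv.Perm.exists_extending_pair _ _ (fun _ _ h => Subtype.ext (congrArg Fin.val h))
      (fun _ _ h => Subtype.ext (hτ (congrArg Fin.val h)))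
  have hrestrict : Measurable fun (y : Fin N → S) (i : I) => y (incl i) := by fun_prop
  have h := congrArg (Measure.map fun (y : Fin N → S) (i : I) => y (incl i)) (hexch N σ)
  rw [AEMeasurable.map_map_of_aemeasurable hrestrict.aemeasurable
      (aemeasurable_pi_lambda _ fun i => hX (σ i)),
    AEMeasurable.map_map_of_aemeasurable hrestrict.aemeasurable
      (aemeasurable_pi_lambda _ fun i => hX i)] at h
  simpa only [Function.comp_def, hσ] using! h

theorem isContractable_map_of_forall_strictMono {Ω : Type*} [MeasurableSpace Ω] {μ : Measure Ω}
    {X : ℕ → Ω → S} (hX : ∀ i, AEMeasurable (X i) μ)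
    (h : ∀ τ : ℕ → ℕ, StrictMono τ → μ.map (fun ω i => X (τ i) ω) = μ.map (fun ω i => X i ω)) :
    IsContractable (μ.map fun ω i => X i ω) := fun τ hτ => by
  have hcomp : Measurable fun x : ℕ → S => x ∘ τ := by fun_prop
  refine ⟨hcomp, ?_⟩
  rw [AEMeasurable.map_map_of_aemeasurable hcomp.aemeasurable (aemeasurable_pi_lambda _ hX),
    ← h τ hτ]
  rfl

theorem measurableSet_forall_fin_mem {n : ℕ} {A : Fin n → Set S}
    (hA : ∀ i, MeasurableSet (A i)) : MeasurableSet {x : ℕ → S | ∀ i : Fin n, x i ∈ A i} := by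
  simp only [Set.ofPred_forall]
  exact MeasurableSet.iInter fun i => measurable_pi_apply _ (hA i)

namespace IsContractable

variable {P : Measure (ℕ → S)}

theorem measurePreserving_shift (hP : IsContractable P) :
    MeasurePreserving (fun x => x ∘ Nat.succ) P P :=
  hP Nat.succ Order.succ_strictMono

theorem lintegral_comp_skip_one (hP : IsContractable P) {F : S → (ℕ → S) → ENNReal}
    (hF : Measurable fun x : ℕ → S => F (x 0) (x ∘ Nat.succ)) :
    ∫⁻ x, F (x 0) (x ∘ Nat.succ ∘ Nat.succ) ∂P = ∫⁻ x, F (x 0) (x ∘ Nat.succ) ∂P :=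
  (hP (fun i => if i = 0 then 0 else i + 1) fun i j hij => by
    dsimp only
    split_ifs <;> omega).lintegral_comp hF

end IsContractable

end Contractable

section DirectingKernel

open ProbabilityTheory (Kernel IsMarkovKernel condDistrib)

theorem ae_isProbabilityMeasure_map_kernel {α β : Type*} [MeasurableSpace α] [MeasurableSpace β]
    (μ : Measure α) (κ : Kernel α β) [IsMarkovKernel κ] :
    ∀ᵐ π ∂(μ.map κ), IsProbabilityMeasure π := by
  have huniv : MeasurableSet {π : Measure β | π Set.univ = 1} :=
    Measure.measurable_coe .univ (measurableSet_singleton 1)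
  simp only [isProbabilityMeasure_iff]
  exact (ae_map_iff κ.measurable.aemeasurable huniv).2 (ae_of_all _ fun _ => measure_univ)

variable {S : Type*} [MeasurableSpace S] [StandardBorelSpace S] [Nonempty S]
  (P : Measure (ℕ → S)) [IsFiniteMeasure P]

/-- The conditional law of the first coordinate given the subsequent ones. Under a contractable `P`
it is the random measure conditionally on which the coordinates are i.i.d. It is a kernel in the
sequence of subsequent coordinates; by stationarity it may be evaluated at the whole sequence. -/
noncomputable def directingKernel : Kernel (ℕ → S) S :=
  condDistrib (fun x => x 0) (fun x => x ∘ Nat.succ) P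

instance : IsMarkovKernel (directingKernel P) := by
  unfold directingKernel
  infer_instance

/-- The law of the directing kernel, a measure on the space of measures. It is the mixing measure
of the Hewitt–Savage theorem when `P` is contractable. -/
noncomputable def mixingMeasure : Measure (Measure S) :=
  P.map (directingKernel P)

instance (P : Measure (ℕ → S)) [IsProbabilityMeasure P] :
    IsProbabilityMeasure (mixingMeasure P) :=
  Measure.isProbabilityMeasure_map (directingKernel P).measurable.aemeasurable

theorem ae_isProbabilityMeasure_mixingMeasure :
    ∀ᵐ π ∂(mixingMeasure P), IsProbabilityMeasure π :=
  ae_isProbabilityMeasure_map_kernel P (directingKernel P)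

variable {P}

namespace IsContractable

theorem lintegral_indicator_mul_shift (hP : IsContractable P) {A : Set S} (hA : MeasurableSet A)
    {G : (ℕ → S) → ENNReal} (hG : Measurable G) :
    ∫⁻ x, A.indicator 1 (x 0) * G (x ∘ Nat.succ) ∂P = ∫⁻ x, directingKernel P x A * G x ∂P := by
  have hshift := hP.measurePreserving_shift
  have hind : Measurable (A.indicator (1 : S → ENNReal)) := measurable_one.indicator hA
  have hF : Measurable fun p : (ℕ → S) × S => A.indicator 1 p.2 * G p.1 := by fun_prop
  have hdisint : P.compProd (directingKernel P) = P.map fun x => (x ∘ Nat.succ, x 0) := by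
    have h := ProbabilityTheory.compProd_map_condDistrib (μ := P) (mβ := MeasurableSpace.pi)
      (X := fun x => x ∘ Nat.succ) (Y := fun x => x 0) (measurable_pi_apply 0).aemeasurable
    rwa [hshift.map_eq] at h
  calc ∫⁻ x, A.indicator 1 (x 0) * G (x ∘ Nat.succ) ∂P
      = ∫⁻ p, A.indicator 1 p.2 * G p.1 ∂(P.map fun x => (x ∘ Nat.succ, x 0)) :=
        (lintegral_map hF (hshift.measurable.prodMk (measurable_pi_apply 0))).symm
    _ = ∫⁻ x, ∫⁻ s, A.indicator 1 s * G x ∂(directingKernel P x) ∂P := by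
        rw [← hdisint, Measure.lintegral_compProd hF]
    _ = ∫⁻ x, directingKernel P x A * G x ∂P :=
        lintegral_congr fun x => by rw [lintegral_mul_const _ hind, lintegral_indicator_one hA]

theorem directingKernel_shift_ae_eq (hP : IsContractable P) {A : Set S} (hA : MeasurableSet A) :
    (fun x => directingKernel P (x ∘ Nat.succ) A) =ᵐ[P] fun x => directingKernel P x A := by
  have hshift := hP.measurePreserving_shift
  have hκ : Measurable fun x => directingKernel P x A := (directingKernel P).measurable_coe hA
  have hκshift : Measurable fun x => directingKernel P (x ∘ Nat.succ) A := hκ.comp hshift.measurable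
  have hind : Measurable (A.indicator (1 : S → ENNReal)) := measurable_one.indicator hA
  refine (ae_eq_of_lintegral_mul_eq_lintegral_mul_self hκ.aemeasurable hκshift.aemeasurable
    ?_ ?_ ?_).symm
  · refine ((lintegral_mono fun x => mul_le_one' prob_le_one prob_le_one).trans_lt ?_).ne
    simp
  · calc ∫⁻ x, directingKernel P x A * directingKernel P (x ∘ Nat.succ) A ∂P
        = ∫⁻ x, A.indicator 1 (x 0) * directingKernel P (x ∘ Nat.succ ∘ Nat.succ) A ∂P :=
          (hP.lintegral_indicator_mul_shift hA hκshift).symm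
      _ = ∫⁻ x, A.indicator 1 (x 0) * directingKernel P (x ∘ Nat.succ) A ∂P :=
          hP.lintegral_comp_skip_one (F := fun s x => A.indicator 1 s * directingKernel P x A)
            ((hind.comp (measurable_pi_apply 0)).mul hκshift)
      _ = ∫⁻ x, directingKernel P x A * directingKernel P x A ∂P :=
          hP.lintegral_indicator_mul_shift hA hκ
  · exact hshift.lintegral_comp (hκ.mul hκ)

-- The induction peels off the first coordinate and moves its conditional probability into `G`.
theorem lintegral_prod_indicator_mul (hP : IsContractable P) {n : ℕ} {A : Fin n → Set S}
    (hA : ∀ i, MeasurableSet (A i)) {G : (ℕ → S) → ENNReal} (hG : Measurable G)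
    (hGshift : (fun x => G (x ∘ Nat.succ)) =ᵐ[P] G) :
    ∫⁻ x, (∏ i, (A i).indicator 1 (x i)) * G x ∂P
      = ∫⁻ x, (∏ i, directingKernel P x (A i)) * G x ∂P := by
  induction n generalizing G with
  | zero => simp
  | succ n ih =>
    have hκ : Measurable fun x => directingKernel P x (A 0) :=
      (directingKernel P).measurable_coe (hA 0)
    have hind : ∀ i, Measurable ((A i).indicator (1 : S → ENNReal)) := fun i =>
      measurable_one.indicator (hA i)
    let H : (ℕ → S) → ENNReal := fun x => (∏ i : Fin n, (A i.succ).indicator 1 (x i)) * G x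
    have hH : Measurable H := by fun_prop
    calc ∫⁻ x, (∏ i, (A i).indicator 1 (x i)) * G x ∂P
        = ∫⁻ x, (A 0).indicator 1 (x 0) * H (x ∘ Nat.succ) ∂P := by
          refine lintegral_congr_ae ?_
          filter_upwards [hGshift] with x hx
          simp [H, hx, Fin.prod_univ_succ, mul_assoc]
      _ = ∫⁻ x, directingKernel P x (A 0) * H x ∂P :=
          hP.lintegral_indicator_mul_shift (hA 0) hH
      _ = ∫⁻ x, (∏ i : Fin n, (A i.succ).indicator 1 (x i))
            * (directingKernel P x (A 0) * G x) ∂P :=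
          lintegral_congr fun x => mul_left_comm _ _ _
      _ = ∫⁻ x, (∏ i : Fin n, directingKernel P x (A i.succ))
            * (directingKernel P x (A 0) * G x) ∂P :=
          ih (fun i => hA i.succ) (hκ.mul hG)
            ((hP.directingKernel_shift_ae_eq (hA 0)).mul hGshift)
      _ = ∫⁻ x, (∏ i, directingKernel P x (A i)) * G x ∂P :=
          lintegral_congr fun x => by rw [Fin.prod_univ_succ]; ring

theorem measure_forall_mem_eq_lintegral_prod (hP : IsContractable P) {n : ℕ} {A : Fin n → Set S}
    (hA : ∀ i, MeasurableSet (A i)) :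
    P {x | ∀ i : Fin n, x i ∈ A i} = ∫⁻ π, ∏ i, π (A i) ∂(mixingMeasure P) := by
  calc P {x | ∀ i : Fin n, x i ∈ A i}
      = ∫⁻ x, {x : ℕ → S | ∀ i : Fin n, x i ∈ A i}.indicator 1 x ∂P :=
        (lintegral_indicator_one (measurableSet_forall_fin_mem hA)).symm
    _ = ∫⁻ x, ∏ i : Fin n, (A i).indicator 1 (x i) ∂P :=
        lintegral_congr fun x => by
          by_cases hx : ∀ i : Fin n, x i ∈ A i
          · simp [hx]
          · obtain ⟨i, hi⟩ := not_forall.1 hx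
            rw [Set.indicator_of_notMem (s := {x : ℕ → S | ∀ i : Fin n, x i ∈ A i}) hx,
              Finset.prod_eq_zero (Finset.mem_univ i) (Set.indicator_of_notMem hi 1)]
    _ = ∫⁻ x, ∏ i, directingKernel P x (A i) ∂P := by
        simpa using hP.lintegral_prod_indicator_mul hA (G := 1) measurable_one .rfl
    _ = ∫⁻ π, ∏ i, π (A i) ∂(mixingMeasure P) :=
        (lintegral_map (Finset.measurable_prod _ fun i _ => Measure.measurable_coe (hA i))
          (directingKernel P).measurable).symm

end IsContractable

end DirectingKernel

section Moments

variable {ι : Type*}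

theorem exists_fin_forall_prod_pow_eq {M : Type*} [CommMonoid M] [Fintype ι] (d : ι → ℕ) :
    ∃ (n : ℕ) (i : Fin n → ι), ∀ x : ι → M, ∏ k, x k ^ d k = ∏ j, x (i j) := by
  let e := (Fintype.equivFin (Σ k, Fin (d k))).symm
  refine ⟨_, fun j => (e j).1, fun x => ?_⟩
  rw [e.prod_comp fun p => x p.1, Fintype.prod_sigma]
  simp

variable {P Q : Measure (ι → unitInterval)} [IsFiniteMeasure P] [IsFiniteMeasure Q]

/-- The algebra of polynomial functions on the cube `[0, 1] ^ ι`, to which Stone–Weierstrass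
applies. -/
def cubePolynomials (ι : Type*) :
    StarSubalgebra ℝ (BoundedContinuousFunction (ι → unitInterval) ℝ) where
  carrier := {g | ∃ p : MvPolynomial ι ℝ, ∀ x, g x = p.eval fun i => (x i : ℝ)}
  mul_mem' := fun ⟨p, hp⟩ ⟨q, hq⟩ => ⟨p * q, fun x => by simp [hp, hq]⟩
  add_mem' := fun ⟨p, hp⟩ ⟨q, hq⟩ => ⟨p + q, fun x => by simp [hp, hq]⟩
  algebraMap_mem' := fun r => ⟨MvPolynomial.C r, fun x => by simp⟩
  star_mem' := fun ⟨p, hp⟩ => ⟨p, fun x => by simp [hp]⟩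

theorem separatesPoints_cubePolynomials :
    ((cubePolynomials ι).map
      (BoundedContinuousFunction.toContinuousMapStarₐ ℝ)).SeparatesPoints := by
  intro x y hxy
  obtain ⟨i, hi⟩ := Function.ne_iff.1 hxy
  let coord : BoundedContinuousFunction (ι → unitInterval) ℝ :=
    BoundedContinuousFunction.mkOfCompact ⟨fun z => (z i : ℝ), by fun_prop⟩
  have hcoord : coord ∈ cubePolynomials ι := ⟨MvPolynomial.X i, fun z => by simp [coord]⟩
  exact ⟨coord, ⟨_, ⟨coord, hcoord, rfl⟩, rfl⟩, Subtype.coe_ne_coe.2 hi⟩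

theorem ext_of_integral_prod_coord_eq_of_finite [Finite ι]
    (h : ∀ (n : ℕ) (i : Fin n → ι), ∫ x, ∏ j, (x (i j) : ℝ) ∂P = ∫ x, ∏ j, (x (i j) : ℝ) ∂Q) :
    P = Q := by
  have := Fintype.ofFinite ι
  refine ext_of_forall_mem_subalgebra_integral_eq_of_polish (𝕜 := ℝ)
    separatesPoints_cubePolynomials ?_
  rintro g ⟨p, hp⟩
  have hmonomial : ∀ d : ι →₀ ℕ, ∫ x, ∏ k, (x k : ℝ) ^ d k ∂P = ∫ x, ∏ k, (x k : ℝ) ^ d k ∂Q :=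
    fun d => by
      obtain ⟨n, i, hi⟩ := exists_fin_forall_prod_pow_eq (M := ℝ) d
      simpa only [hi] using h n i
  have hexpand : ∀ (ρ : Measure (ι → unitInterval)) [IsFiniteMeasure ρ],
      ∫ x, g x ∂ρ = ∑ d ∈ p.support, p.coeff d * ∫ x, ∏ k, (x k : ℝ) ^ d k ∂ρ := fun ρ _ => by
    simp only [hp, MvPolynomial.eval_eq', ← integral_const_mul]
    refine integral_finsetSum _ fun d _ => ?_
    have hcont : Continuous fun x : ι → unitInterval => p.coeff d * ∏ k, (x k : ℝ) ^ d k := by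
      fun_prop
    exact (BoundedContinuousFunction.mkOfCompact ⟨_, hcont⟩).integrable ρ
  simp only [hexpand, hmonomial]

theorem ext_of_integral_prod_coord_eq
    (h : ∀ (n : ℕ) (i : Fin n → ι), ∫ x, ∏ j, (x (i j) : ℝ) ∂P = ∫ x, ∏ j, (x (i j) : ℝ) ∂Q) :
    P = Q := by
  have hrestrict : ∀ I : Finset ι, P.map I.restrict = Q.map I.restrict := fun I => by
    refine ext_of_integral_prod_coord_eq_of_finite fun n i => ?_
    have hcont : Continuous fun x : I → unitInterval => ∏ j, (x (i j) : ℝ) := by fun_prop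
    rw [integral_map (by fun_prop) hcont.aestronglyMeasurable,
      integral_map (by fun_prop) hcont.aestronglyMeasurable]
    exact h n fun j => i j
  have hP : IsProjectiveLimit P fun I => P.map I.restrict := fun _ => rfl
  exact hP.unique fun I => (hrestrict I).symm

end Moments

section MeasuresOnMeasures

variable {S : Type*} [MeasurableSpace S]

/-- The values of a measure on the measurable sets. They are clamped to `[0, 1]`, which changes
nothing for probability measures, so that the evaluation map is defined on all measures. -/
noncomputable def clampedEvaluation (π : Measure S) (A : {A : Set S // MeasurableSet A}) :
    unitInterval :=
  Set.projIcc 0 1 zero_le_one (π.real A)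

theorem measurable_clampedEvaluation : Measurable (clampedEvaluation (S := S)) :=
  measurable_pi_lambda _ fun A =>
    continuous_projIcc.measurable.comp (Measure.measurable_coe A.2).ennreal_toReal

theorem coe_clampedEvaluation (π : Measure S) [IsProbabilityMeasure π]
    (A : {A : Set S // MeasurableSet A}) : (clampedEvaluation π A : ℝ) = π.real A := by
  rw [clampedEvaluation, Set.projIcc_of_mem zero_le_one ⟨measureReal_nonneg, measureReal_le_one⟩]

variable {μ ν : Measure (Measure S)}

theorem integral_prod_clampedEvaluation (hμ : ∀ᵐ π ∂μ, IsProbabilityMeasure π) {n : ℕ}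
    (A : Fin n → {A : Set S // MeasurableSet A}) :
    ∫ π, ∏ i, (clampedEvaluation π (A i) : ℝ) ∂μ = (∫⁻ π, ∏ i, π (A i) ∂μ).toReal := by
  rw [← integral_toReal]
  · refine integral_congr_ae ?_
    filter_upwards [hμ] with π hπ
    simp only [ENNReal.toReal_prod, coe_clampedEvaluation, measureReal_def]
  · exact (Finset.measurable_prod _ fun i _ => Measure.measurable_coe (A i).2).aemeasurable
  · filter_upwards [hμ] with π hπ
    exact ENNReal.prod_lt_top fun i _ => measure_lt_top _ _

theorem measurableSpace_measure_eq_comap :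
    (Measure.instMeasurableSpace : MeasurableSpace (Measure S))
      = MeasurableSpace.comap (fun (π : Measure S) (A : {A : Set S // MeasurableSet A}) => π A)
          MeasurableSpace.pi := by
  simp only [Measure.instMeasurableSpace, MeasurableSpace.pi, MeasurableSpace.comap_iSup,
    MeasurableSpace.comap_comp, iSup_subtype]
  rfl

theorem ext_of_map_clampedEvaluation_eq (hμ : ∀ᵐ π ∂μ, IsProbabilityMeasure π)
    (hν : ∀ᵐ π ∂ν, IsProbabilityMeasure π)
    (h : μ.map clampedEvaluation = ν.map clampedEvaluation) : μ = ν := by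
  let unclamp (x : {A : Set S // MeasurableSet A} → unitInterval) :
    {A : Set S // MeasurableSet A} → ENNReal := fun A => ENNReal.ofReal (x A)
  have hunclamp : Measurable unclamp := by fun_prop
  ext B hB
  rw [measurableSpace_measure_eq_comap] at hB
  obtain ⟨C, hC, rfl⟩ := hB
  have hlaw : ∀ {ρ : Measure (Measure S)}, (∀ᵐ π ∂ρ, IsProbabilityMeasure π) →
      ρ ((fun (π : Measure S) (A : {A : Set S // MeasurableSet A}) => π A) ⁻¹' C)
        = ρ.map clampedEvaluation (unclamp ⁻¹' C) := fun hρ => by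
    rw [Measure.map_apply measurable_clampedEvaluation (hunclamp hC)]
    refine measure_congr ?_
    filter_upwards [hρ] with π hπ
    have hπunclamp : unclamp (clampedEvaluation π) = fun A => π A.1 := by
      ext A
      simp [unclamp, coe_clampedEvaluation]
    exact congrArg (· ∈ C) hπunclamp.symm
  rw [hlaw hμ, hlaw hν, h]

theorem ext_of_lintegral_prod_apply_eq [IsFiniteMeasure μ] [IsFiniteMeasure ν]
    (hμ : ∀ᵐ π ∂μ, IsProbabilityMeasure π) (hν : ∀ᵐ π ∂ν, IsProbabilityMeasure π)
    (h : ∀ (n : ℕ) (A : Fin n → Set S), (∀ i, MeasurableSet (A i)) →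
      ∫⁻ π, ∏ i, π (A i) ∂μ = ∫⁻ π, ∏ i, π (A i) ∂ν) : μ = ν := by
  refine ext_of_map_clampedEvaluation_eq hμ hν (ext_of_integral_prod_coord_eq fun n A => ?_)
  have hprod : Measurable fun x : {A : Set S // MeasurableSet A} → unitInterval =>
      ∏ i, (x (A i) : ℝ) := by fun_prop
  rw [integral_map measurable_clampedEvaluation.aemeasurable hprod.aestronglyMeasurable,
    integral_map measurable_clampedEvaluation.aemeasurable hprod.aestronglyMeasurable,
    integral_prod_clampedEvaluation hμ, integral_prod_clampedEvaluation hν,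
    h n _ fun i => (A i).2]

end MeasuresOnMeasures

theorem hewitt_savage_general
    {Ω : Type*} [MeasurableSpace Ω] (ℙ : Measure Ω) [IsProbabilityMeasure ℙ]
    {S : Type*} [MeasurableSpace S] [StandardBorelSpace S]
    (X : ℕ → Ω → S)
    (hmeas : ∀ i, AEMeasurable (X i) ℙ)
    (hcontr : ∀ τ : ℕ → ℕ, StrictMono τ →
      Measure.map (fun ω i => X (τ i) ω) ℙ = Measure.map (fun ω i => X i ω) ℙ) :
    ∃! μ : Measure (Measure S), IsProbabilityMeasure μ ∧
      (∀ᵐ π ∂μ, IsProbabilityMeasure π) ∧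
      ∀ (n : ℕ), 0 < n → ∀ A : Fin n → Set S, (∀ i, MeasurableSet (A i)) →
        ℙ {ω | ∀ i : Fin n, X i ω ∈ A i} = ∫⁻ π, ∏ i, π (A i) ∂μ := by
  have hX : AEMeasurable (fun ω i => X i ω) ℙ := aemeasurable_pi_lambda _ hmeas
  let P := ℙ.map fun ω i => X i ω
  have hP : IsContractable P := isContractable_map_of_forall_strictMono hmeas hcontr
  have : IsProbabilityMeasure P := Measure.isProbabilityMeasure_map hX
  have : Nonempty S := (nonempty_of_isProbabilityMeasure P).map (· 0)
  have hlaw : ∀ {n : ℕ} {A : Fin n → Set S}, (∀ i, MeasurableSet (A i)) →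
      ℙ {ω | ∀ i : Fin n, X i ω ∈ A i} = ∫⁻ π, ∏ i, π (A i) ∂(mixingMeasure P) := fun hA =>
    (Measure.map_apply_of_aemeasurable hX (measurableSet_forall_fin_mem hA)).symm.trans
      (hP.measure_forall_mem_eq_lintegral_prod hA)
  have hae := ae_isProbabilityMeasure_mixingMeasure P
  refine ⟨mixingMeasure P, ⟨inferInstance, hae, fun _ _ _ hA => hlaw hA⟩, ?_⟩
  rintro ν ⟨hν, hνae, hνlaw⟩
  refine ext_of_lintegral_prod_apply_eq hνae hae fun n A hA => ?_
  rcases n.eq_zero_or_pos with rfl | hn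
  · simp
  · rw [← hνlaw n hn A hA, hlaw hA]

/-- **Hewitt–Savage theorem.** An infinite exchangeable sequence with values in a standard
Borel space `S` is a unique mixture of i.i.d. sequences: there is a unique probability
measure `μ` on the space of (probability) measures on `S` (with the σ-algebra generated by
the evaluation maps) reproducing all finite-dimensional distributions as mixtures of
product probabilities. -/
theorem hewitt_savage
    {Ω : Type*} [MeasurableSpace Ω] (ℙ : Measure Ω) [IsProbabilityMeasure ℙ]
    {S : Type*} [MeasurableSpace S] [StandardBorelSpace S]
    (X : ℕ → Ω → S)
    (hmeas : ∀ i, Measurable (X i))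
    (hexch : ∀ (n : ℕ) (σ : Equiv.Perm (Fin n)),
      Measure.map (fun ω (i : Fin n) => X (σ i) ω) ℙ
        = Measure.map (fun ω (i : Fin n) => X i ω) ℙ) :
    ∃! μ : Measure (Measure S), IsProbabilityMeasure μ ∧
      (∀ᵐ π ∂μ, IsProbabilityMeasure π) ∧
      ∀ (n : ℕ), 0 < n → ∀ A : Fin n → Set S, (∀ i, MeasurableSet (A i)) →
        ℙ {ω | ∀ i : Fin n, X i ω ∈ A i} = ∫⁻ π, ∏ i, π (A i) ∂μ :=
  hewitt_savage_general ℙ X (fun i => (hmeas i).aemeasurable) fun _ hτ =>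
    map_comp_eq_of_exchangeable (fun i => (hmeas i).aemeasurable) hexch hτ.injective
end

section
/- Let X = (X_1, ..., X_n) be a finite exchangeable sequence of random variables, each taking values in a measurable space S. Then X can be represented as a mixture of urn sequences: there exists a probability measure μ on S^n such that for every measurable A ⊆ S^n, Pr(X ∈ A) = ∫_{S^n} Pr(σ_x(x) ∈ A) dμ(x), where for each x ∈ S^n, σ_x is a uniform random permutation of {1, ..., n} applied to the deterministic tuple x. -/
open MeasureTheory

/-!
The law of the sequence is its own mixing measure: permuting the coordinates preserves it, so
replacing the indicator of `A` by its average over all permutations does not change its integral.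
-/

open scoped ENNReal Nat

theorem lintegral_sum_comp_div_card {α β κ : Type*} [MeasurableSpace α] [MeasurableSpace β]
    [Fintype κ] [Nonempty κ] {μ : Measure α} {ν : Measure β} {T : κ → α → β}
    (hT : ∀ k, MeasurePreserving (T k) μ ν) {f : β → ℝ≥0∞} (hf : AEMeasurable f ν) :
    ∫⁻ x, (∑ k, f (T k x)) / Fintype.card κ ∂μ = ∫⁻ y, f y ∂ν := by
  have hfT (k : κ) : AEMeasurable (fun x ↦ f (T k x)) μ :=
    hf.comp_quasiMeasurePreserving (hT k).quasiMeasurePreserving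
  have hint (k : κ) : ∫⁻ x, f (T k x) ∂μ = ∫⁻ y, f y ∂ν := by
    rw [← (hT k).map_eq] at hf ⊢
    exact (lintegral_map' hf (hT k).aemeasurable).symm
  have hcard : (Fintype.card κ : ℝ≥0∞) ≠ 0 := Nat.cast_ne_zero.mpr Fintype.card_ne_zero
  calc ∫⁻ x, (∑ k, f (T k x)) / Fintype.card κ ∂μ
    _ = (∑ k, ∫⁻ x, f (T k x) ∂μ) / Fintype.card κ := by
      simp only [div_eq_mul_inv]
      rw [lintegral_mul_const'' _ (Finset.aemeasurable_fun_sum _ fun k _ ↦ hfT k),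
        lintegral_finsetSum' _ fun k _ ↦ hfT k]
    _ = Fintype.card κ * (∫⁻ y, f y ∂ν) / Fintype.card κ := by
      simp only [hint, Finset.sum_const, Finset.card_univ, nsmul_eq_mul]
    _ = ∫⁻ y, f y ∂ν := by
      rw [mul_comm, ENNReal.mul_div_cancel_right hcard (ENNReal.natCast_ne_top _)]

section Exchangeable

variable {ι S : Type*} [MeasurableSpace S]

/-- A measure on families `ι → S` is exchangeable if it is invariant under all permutations of the
coordinates. This is a property of laws: a family of random variables is exchangeable when its
joint law is, see `isExchangeable_map_iff`. -/
def IsExchangeable (P : Measure (ι → S)) : Prop :=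
  ∀ σ : Equiv.Perm ι, P.map (fun x i ↦ x (σ i)) = P

theorem IsExchangeable.measurePreserving {P : Measure (ι → S)} (hP : IsExchangeable P)
    (σ : Equiv.Perm ι) : MeasurePreserving (fun (x : ι → S) i ↦ x (σ i)) P P :=
  ⟨by fun_prop, hP σ⟩

theorem isExchangeable_map_iff [Countable ι] {Ω : Type*} [MeasurableSpace Ω] {ℙ : Measure Ω}
    {X : ι → Ω → S} (hX : ∀ i, AEMeasurable (X i) ℙ) :
    IsExchangeable (ℙ.map fun ω i ↦ X i ω) ↔
      ∀ σ : Equiv.Perm ι, ℙ.map (fun ω i ↦ X (σ i) ω) = ℙ.map fun ω i ↦ X i ω := by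
  have hmap (σ : Equiv.Perm ι) :
      (ℙ.map fun ω i ↦ X i ω).map (fun x i ↦ x (σ i)) = ℙ.map fun ω i ↦ X (σ i) ω :=
    AEMeasurable.map_map_of_aemeasurable (Measurable.aemeasurable (by fun_prop))
      (aemeasurable_pi_lambda _ hX)
  simp only [IsExchangeable, hmap]

variable [Fintype ι] [DecidableEq ι]

theorem IsExchangeable.lintegral_sum_perm_div_factorial {P : Measure (ι → S)}
    (hP : IsExchangeable P) {f : (ι → S) → ℝ≥0∞} (hf : AEMeasurable f P) :
    ∫⁻ x, (∑ σ : Equiv.Perm ι, f fun i ↦ x (σ i)) / ((Fintype.card ι)! : ℝ≥0∞) ∂P =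
      ∫⁻ x, f x ∂P := by
  rw [← Fintype.card_perm]
  exact lintegral_sum_comp_div_card hP.measurePreserving hf

theorem urn_representation_general {Ω : Type*} [MeasurableSpace Ω] (ℙ : Measure Ω)
    (X : ι → Ω → S) (hmeas : ∀ i, AEMeasurable (X i) ℙ)
    (hexch : ∀ σ : Equiv.Perm ι,
      ℙ.map (fun ω i ↦ X (σ i) ω) = ℙ.map fun ω i ↦ X i ω) :
    ∃ μ : Measure (ι → S), μ Set.univ = ℙ Set.univ ∧
      ∀ A : Set (ι → S), MeasurableSet A →
        ℙ.map (fun ω i ↦ X i ω) A =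
          ∫⁻ x, (∑ σ : Equiv.Perm ι, A.indicator (fun _ ↦ (1 : ℝ≥0∞)) fun i ↦ x (σ i)) /
            ((Fintype.card ι)! : ℝ≥0∞) ∂μ := by
  refine ⟨ℙ.map fun ω i ↦ X i ω, ?_, fun A hA ↦ ?_⟩
  · exact Measure.map_apply_of_aemeasurable (aemeasurable_pi_lambda _ hmeas) .univ
  · have hlaw := (isExchangeable_map_iff hmeas).mpr hexch
    rw [hlaw.lintegral_sum_perm_div_factorial (aemeasurable_const.indicator hA),
      lintegral_indicator_const hA, one_mul]

end Exchangeable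

/-- **Urn representation of finite exchangeable sequences (Kallenberg).** A finite
exchangeable sequence `X = (X_1, ..., X_n)` with values in a measurable space `S` is a
mixture of urn sequences: there is a probability measure `μ` on `S^n` such that for every
measurable `A ⊆ S^n`, `Pr(X ∈ A) = ∫ Pr(σ_x(x) ∈ A) dμ(x)`, where `σ_x` is a uniform random
permutation, so that `Pr(σ_x(x) ∈ A)` is the fraction of permutations `σ` with `x ∘ σ ∈ A`. -/
theorem urn_representation
    {Ω : Type*} [MeasurableSpace Ω] (ℙ : Measure Ω) [IsProbabilityMeasure ℙ]
    {S : Type*} [MeasurableSpace S]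
    (n : ℕ)
    (X : Fin n → Ω → S)
    (hmeas : ∀ i, Measurable (X i))
    (hexch : ∀ σ : Equiv.Perm (Fin n),
      Measure.map (fun ω (i : Fin n) => X (σ i) ω) ℙ
        = Measure.map (fun ω (i : Fin n) => X i ω) ℙ) :
    ∃ μ : Measure (Fin n → S), IsProbabilityMeasure μ ∧
      ∀ A : Set (Fin n → S), MeasurableSet A →
        (Measure.map (fun ω (i : Fin n) => X i ω) ℙ) A
          = ∫⁻ x, (∑ σ : Equiv.Perm (Fin n),
              Set.indicator A (fun _ => (1 : ENNReal)) (fun i => x (σ i)))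
              / (Nat.factorial n : ENNReal) ∂μ := by
  obtain ⟨μ, hμ, hmix⟩ := urn_representation_general ℙ X (fun i ↦ (hmeas i).aemeasurable) hexch
  exact ⟨μ, ⟨hμ.trans measure_univ⟩, by simpa only [Fintype.card_fin] using hmix⟩
end

section
/- Let S be a measurable space equipped with a linear order ≺ whose ordered set Ord(S^n) = {(x_1, ..., x_n) ∈ S^n : x_1 ≺ ... ≺ x_n or more generally x_1 ⪯ ... ⪯ x_n} is measurable, and let X = (X_1, ..., X_n) be an arbitrary finite sequence of S-valued random variables. Then the mixing measure in the elementary-sequence decomposition can be chosen order respecting: there exist a probability measure μ on S^n with μ(A) = 0 for every measurable A ⊆ S^n disjoint from Ord(S^n), and for each x ∈ S^n a probability measure ν_x on Σ_n × Σ_n with both marginals uniform, such that for every measurable A ⊆ S^n, Pr(X ∈ A) = ∫_{Ord(S^n)} ν_x({(α, β) : (α∘β)(x) ∈ A}) dμ(x). -/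
open MeasureTheory

/-- Permutation groups are countable discrete spaces; equip them with the discrete
σ-algebra. -/
instance permMeasurableSpace (n : ℕ) : MeasurableSpace (Equiv.Perm (Fin n)) := ⊤

/-!
Choose measurably a permutation `τ y` carrying each tuple `y` into the set `O` of ordered tuples.
The law `μ` of `y ∘ τ y` is carried by `O`, and the conditional law `κ x` of `(τ y)⁻¹` given
`y ∘ τ y = x` recovers `y` as `x ∘ γ` with `γ` distributed according to `κ x`. If `β` is uniform and
independent of `γ`, then so is `γ / β`, and `γ = (γ / β) * β` writes `γ` as a product of two
(dependent) uniform permutations.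
-/

open ProbabilityTheory (Kernel IsMarkovKernel condDistrib compProd_map_condDistrib uniformOn
  uniformOn_univ)

section Selection

variable {α ι : Type*} [MeasurableSpace α] [Countable ι] [MeasurableSpace ι]

theorem exists_measurable_selection {p : α → ι → Prop}
    (hp : ∀ i, MeasurableSet {a | p a i}) (hex : ∀ a, ∃ i, p a i) :
    ∃ f : α → ι, Measurable f ∧ ∀ a, p a (f a) := by
  classical
  rcases isEmpty_or_nonempty α with _ | ⟨⟨a₀⟩⟩
  · exact ⟨isEmptyElim, measurable_of_empty _, isEmptyElim⟩
  have : Nonempty ι := ⟨(hex a₀).choose⟩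
  obtain ⟨e, he⟩ := exists_surjective_nat ι
  have hex_nat : ∀ a, ∃ k, p a (e k) := fun a => he.exists.mp (hex a)
  exact ⟨fun a => e (Nat.find (hex_nat a)),
    (measurable_from_top (f := e)).comp (measurable_find hex_nat fun k => hp (e k)),
    fun a => Nat.find_spec (hex_nat a)⟩

end Selection

section Disintegration

variable {Ω β E : Type*} [MeasurableSpace Ω] [MeasurableSpace β] [MeasurableSpace E]
  [StandardBorelSpace E] [Nonempty E]

theorem lintegral_condDistrib_prodMk_preimage (P : Measure Ω) [IsFiniteMeasure P]
    {X : Ω → β} {Y : Ω → E} (hX : AEMeasurable X P) (hY : AEMeasurable Y P)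
    {s : Set (β × E)} (hs : MeasurableSet s) :
    ∫⁻ b, condDistrib Y X P b (Prod.mk b ⁻¹' s) ∂(P.map X) = P {ω | (X ω, Y ω) ∈ s} := by
  rw [← Measure.compProd_apply hs, compProd_map_condDistrib hY,
    Measure.map_apply_of_aemeasurable (hX.prodMk hY) hs, Set.preimage]

end Disintegration

section FactorCoupling

variable {G : Type*} [Group G] [MeasurableSpace G]

/-- The law of the pair `(γ / b, b)` where `γ` and `b` are independent with laws `κ` and `m`.
It couples two factors of a `κ`-distributed element of the group, which both have law `m` when `m`
is an invariant probability measure. -/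
noncomputable def factorCoupling (κ m : Measure G) : Measure (G × G) :=
  (κ.prod m).map fun p => (p.1 / p.2, p.2)

variable [MeasurableDiv₂ G] (κ m : Measure G)

theorem measurable_div_prodMk_snd : Measurable fun p : G × G => (p.1 / p.2, p.2) :=
  measurable_div.prodMk measurable_snd

instance factorCoupling.isProbabilityMeasure [IsProbabilityMeasure κ] [IsProbabilityMeasure m] :
    IsProbabilityMeasure (factorCoupling κ m) :=
  Measure.isProbabilityMeasure_map measurable_div_prodMk_snd.aemeasurable

theorem map_fst_factorCoupling [MeasurableMul G] [MeasurableInv G] [IsProbabilityMeasure κ]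
    [SFinite m] [m.IsMulLeftInvariant] [m.IsInvInvariant] :
    (factorCoupling κ m).map Prod.fst = m := by
  have hdiv : MeasurePreserving (fun p : G × G => (p.1, p.1 / p.2)) (κ.prod m) (κ.prod m) :=
    (MeasurePreserving.id κ).skew_product measurable_div
      (.of_forall fun γ => Measure.map_div_left_eq_self m γ)
  rw [factorCoupling, Measure.map_map measurable_fst measurable_div_prodMk_snd]
  exact (measurePreserving_snd.comp hdiv).map_eq

theorem map_snd_factorCoupling [IsProbabilityMeasure κ] [SFinite m] :
    (factorCoupling κ m).map Prod.snd = m := by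
  rw [factorCoupling, Measure.map_map measurable_snd measurable_div_prodMk_snd]
  exact measurePreserving_snd.map_eq

theorem map_mul_factorCoupling [MeasurableMul₂ G] [IsProbabilityMeasure m] :
    (factorCoupling κ m).map (fun p => p.1 * p.2) = κ := by
  rw [factorCoupling, Measure.map_map measurable_mul measurable_div_prodMk_snd]
  simp only [Function.comp_def, div_mul_cancel]
  exact measurePreserving_fst.map_eq

end FactorCoupling

section Uniform

variable {G : Type*} [MeasurableSpace G]

theorem uniformOn_univ_eq_smul_count [Fintype G] :
    uniformOn (Set.univ : Set G) = (Fintype.card G : ENNReal)⁻¹ • Measure.count := by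
  ext s
  rw [uniformOn_univ, ENNReal.div_eq_inv_mul, Measure.smul_apply, smul_eq_mul]

variable [Group G] [Finite G]

instance isMulLeftInvariant_uniformOn_univ [MeasurableMul G] :
    (uniformOn (Set.univ : Set G)).IsMulLeftInvariant := by
  have := Fintype.ofFinite G
  rw [uniformOn_univ_eq_smul_count]
  infer_instance

instance isInvInvariant_uniformOn_univ [MeasurableInv G] :
    (uniformOn (Set.univ : Set G)).IsInvInvariant := by
  have := Fintype.ofFinite G
  rw [uniformOn_univ_eq_smul_count]
  exact ⟨by rw [Measure.inv_def, Measure.map_smul, ← Measure.inv_def, Measure.inv_eq_self]⟩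

end Uniform

section Rearrangement

variable {S : Type*} [MeasurableSpace S] {n : ℕ}

instance permDiscreteMeasurableSpace (n : ℕ) :
    DiscreteMeasurableSpace (Equiv.Perm (Fin n)) :=
  ⟨fun _ => trivial⟩

theorem uniformOn_univ_perm_singleton (σ : Equiv.Perm (Fin n)) :
    uniformOn Set.univ {σ} = (n.factorial : ENNReal)⁻¹ := by
  rw [uniformOn_univ, Measure.count_singleton, one_div, Fintype.card_perm, Fintype.card_fin]

theorem measurable_comp_perm :
    Measurable fun q : (Fin n → S) × Equiv.Perm (Fin n) => q.1 ∘ q.2 :=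
  measurable_from_prod_countable_left fun σ =>
    measurable_pi_lambda _ fun i => measurable_pi_apply (σ i)

theorem exists_measurable_perm_comp_mem {O : Set (Fin n → S)} (hO : MeasurableSet O)
    (hperm : ∀ x, ∃ σ : Equiv.Perm (Fin n), x ∘ σ ∈ O) :
    ∃ τ : (Fin n → S) → Equiv.Perm (Fin n), Measurable τ ∧ ∀ x, x ∘ τ x ∈ O :=
  exists_measurable_selection
    (fun _ => (measurable_comp_perm.comp (measurable_id.prodMk measurable_const)) hO) hperm

theorem exists_randomly_permuted_representation {O : Set (Fin n → S)} (hO : MeasurableSet O)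
    (hperm : ∀ x, ∃ σ : Equiv.Perm (Fin n), x ∘ σ ∈ O)
    (P : Measure (Fin n → S)) [IsProbabilityMeasure P] :
    ∃ (μ : Measure (Fin n → S)) (κ : Kernel (Fin n → S) (Equiv.Perm (Fin n))),
      IsProbabilityMeasure μ ∧ IsMarkovKernel κ ∧ (∀ᵐ x ∂μ, x ∈ O) ∧
      ∀ A, MeasurableSet A → P A = ∫⁻ x, κ x {γ | x ∘ γ ∈ A} ∂μ := by
  obtain ⟨τ, hτ, hτO⟩ := exists_measurable_perm_comp_mem hO hperm
  have hT : Measurable fun x => x ∘ τ x := measurable_comp_perm.comp (measurable_id.prodMk hτ)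
  refine ⟨P.map fun x => x ∘ τ x, condDistrib (fun x => (τ x)⁻¹) (fun x => x ∘ τ x) P,
    Measure.isProbabilityMeasure_map hT.aemeasurable, inferInstance, ?_, fun A hA => ?_⟩
  · exact (ae_map_iff hT.aemeasurable hO).mpr (.of_forall hτO)
  · have hundo : ∀ x, (x ∘ τ x) ∘ ⇑(τ x)⁻¹ = x := fun x => by
      rw [Function.comp_assoc, ← Equiv.Perm.coe_mul, mul_inv_cancel, Equiv.Perm.coe_one,
        Function.comp_id]
    have hγ : Measurable fun x => (τ x)⁻¹ := hτ.inv
    have hdisint := lintegral_condDistrib_prodMk_preimage P hT.aemeasurable hγ.aemeasurable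
      (measurable_comp_perm hA)
    simpa only [Set.preimage, Set.mem_ofPred_eq, hundo, Set.ofPred_mem_eq] using hdisint.symm

end Rearrangement

theorem decomposition_into_elementary_sequences_order_respecting_general
    {Ω : Type*} [MeasurableSpace Ω] (ℙ : Measure Ω) [IsProbabilityMeasure ℙ]
    {S : Type*} [MeasurableSpace S] {n : ℕ} {O : Set (Fin n → S)} (hO : MeasurableSet O)
    (hperm : ∀ x, ∃ σ : Equiv.Perm (Fin n), x ∘ σ ∈ O)
    {X : Fin n → Ω → S} (hmeas : ∀ i, Measurable (X i)) :
    ∃ (μ : Measure (Fin n → S))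
      (ν : (Fin n → S) → Measure (Equiv.Perm (Fin n) × Equiv.Perm (Fin n))),
      IsProbabilityMeasure μ ∧
      (∀ A : Set (Fin n → S), MeasurableSet A → A ∩ O = ∅ → μ A = 0) ∧
      (∀ x, IsProbabilityMeasure (ν x)) ∧
      (∀ x (σ : Equiv.Perm (Fin n)),
        (ν x).map Prod.fst {σ} = (n.factorial : ENNReal)⁻¹) ∧
      (∀ x (σ : Equiv.Perm (Fin n)),
        (ν x).map Prod.snd {σ} = (n.factorial : ENNReal)⁻¹) ∧
      ∀ A : Set (Fin n → S), MeasurableSet A →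
        ℙ.map (fun ω i => X i ω) A
          = ∫⁻ x in O, ν x {p | (fun i => x (p.1 (p.2 i))) ∈ A} ∂μ := by
  have := Measure.isProbabilityMeasure_map (μ := ℙ) (measurable_pi_lambda _ hmeas).aemeasurable
  obtain ⟨μ, κ, hμ, hκ, hμO, hmix⟩ :=
    exists_randomly_permuted_representation hO hperm (ℙ.map fun ω i => X i ω)
  refine ⟨μ, fun x => factorCoupling (κ x) (uniformOn Set.univ), hμ, fun A _ hAO => ?_,
    fun x => inferInstance, fun x σ => ?_, fun x σ => ?_, fun A hA => ?_⟩
  · exact measure_mono_null (Set.disjoint_iff_inter_eq_empty.mpr hAO).subset_compl_right hμO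
  · rw [map_fst_factorCoupling, uniformOn_univ_perm_singleton]
  · rw [map_snd_factorCoupling, uniformOn_univ_perm_singleton]
  · rw [Measure.restrict_eq_self_of_ae_mem hμO, hmix A hA]
    refine lintegral_congr fun x => ?_
    calc κ x {γ | x ∘ γ ∈ A}
      _ = (factorCoupling (κ x) (uniformOn Set.univ)).map (fun p => p.1 * p.2)
            {γ | x ∘ γ ∈ A} := by rw [map_mul_factorCoupling]
      _ = factorCoupling (κ x) (uniformOn Set.univ) {p | (fun i => x (p.1 (p.2 i))) ∈ A} :=
        Measure.map_apply measurable_mul .of_discrete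

/-- **Order-respecting decomposition into elementary sequences.** If `S` carries a linear
order whose set `Ord(S^n)` of nondecreasing `n`-tuples is measurable, then the mixing
measure in the elementary-sequence decomposition of an arbitrary finite random sequence can
be chosen order respecting: `μ` vanishes on measurable sets disjoint from `Ord(S^n)`, and
`Pr(X ∈ A) = ∫_{Ord(S^n)} Pr((α∘β)(x) ∈ A) dμ(x)`. -/
theorem decomposition_into_elementary_sequences_order_respecting
    {Ω : Type*} [MeasurableSpace Ω] (ℙ : Measure Ω) [IsProbabilityMeasure ℙ]
    {S : Type*} [MeasurableSpace S] [LinearOrder S]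
    (n : ℕ)
    (hOrd : MeasurableSet {x : Fin n → S | Monotone x})
    (X : Fin n → Ω → S)
    (hmeas : ∀ i, Measurable (X i)) :
    ∃ (μ : Measure (Fin n → S))
      (ν : (Fin n → S) → Measure (Equiv.Perm (Fin n) × Equiv.Perm (Fin n))),
      IsProbabilityMeasure μ ∧
      (∀ A : Set (Fin n → S), MeasurableSet A →
        A ∩ {x : Fin n → S | Monotone x} = ∅ → μ A = 0) ∧
      (∀ x, IsProbabilityMeasure (ν x)) ∧
      (∀ x (σ : Equiv.Perm (Fin n)),
        Measure.map Prod.fst (ν x) {σ} = ((Nat.factorial n : ENNReal))⁻¹) ∧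
      (∀ x (σ : Equiv.Perm (Fin n)),
        Measure.map Prod.snd (ν x) {σ} = ((Nat.factorial n : ENNReal))⁻¹) ∧
      ∀ A : Set (Fin n → S), MeasurableSet A →
        (Measure.map (fun ω (i : Fin n) => X i ω) ℙ) A
          = ∫⁻ x in {x : Fin n → S | Monotone x},
              ν x {p | (fun i => x (p.1 (p.2 i))) ∈ A} ∂μ := by
  exact decomposition_into_elementary_sequences_order_respecting_general ℙ hOrd
    (fun x => ⟨Tuple.sort x, Tuple.monotone_sort x⟩) hmeas
end
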